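/- Let r > 0, α > 1, γ = (α−1)/r and c̄ > 0. Then for every λ ≥ c̄ and every y ∈ ℕ, γ²·(ψ₁(γλ+y) − ψ₁(γλ+y+α+r) + ψ₁(γλ) − ψ₁(γλ+α)) ≤ (2α+2+r)/c̄², where ψ₁ is the trigamma function; this quantity bounds the absolute value of the second derivative of λ ↦ log p(y; λ, r, α). -/

import Mathlib

noncomputable def betaFn (a b : ℝ) : ℝ := Real.Gamma a * Real.Gamma b / Real.Gamma (a + b)

noncomputable def bnbPmf (lam r a : ℝ) (y : ℕ) : ℝ :=
  Real.Gamma ((y : ℝ) + r) / (Real.Gamma ((y : ℝ) + 1) * Real.Gamma r) *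
    (betaFn (a + r) ((a - 1) * lam / r + (y : ℝ)) / betaFn a ((a - 1) * lam / r))

noncomputable def digamma (x : ℝ) : ℝ := deriv (fun t => Real.log (Real.Gamma t)) x

noncomputable def trigamma (x : ℝ) : ℝ := deriv digamma x

open Set Filter Topology

theorem differentiableAt_log_Gamma {x : ℝ} (hx : 0 < x) :
    DifferentiableAt ℝ (fun t => Real.log (Real.Gamma t)) x :=
  (Real.differentiableOn_Gamma_Ioi.differentiableAt (Ioi_mem_nhds hx)).log
    (Real.Gamma_pos_of_pos hx).ne'

theorem hasDerivAt_log_Gamma {x : ℝ} (hx : 0 < x) :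
    HasDerivAt (fun t => Real.log (Real.Gamma t)) (digamma x) x :=
  (differentiableAt_log_Gamma hx).hasDerivAt

theorem contDiffAt_Gamma_two {x : ℝ} (hx : 0 < x) : ContDiffAt ℝ 2 Real.Gamma x := by
  have hd : DifferentiableOn ℂ Complex.Gamma {z : ℂ | 0 < z.re} := by
    intro z hz
    refine (Complex.differentiableAt_Gamma z fun m hm => ?_).differentiableWithinAt
    have hre : z.re = -(m : ℝ) := by simp [hm]
    have hz0 : 0 < z.re := hz
    have hm0 : (0 : ℝ) ≤ m := m.cast_nonneg
    linarith
  have hopen : IsOpen {z : ℂ | 0 < z.re} := isOpen_lt continuous_const Complex.continuous_re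
  have hmem : (x : ℂ) ∈ {z : ℂ | 0 < z.re} := by simpa using hx
  exact (hd.analyticAt (hopen.mem_nhds hmem)).contDiffAt.real_of_complex

theorem hasDerivAt_digamma {x : ℝ} (hx : 0 < x) : HasDerivAt digamma (trigamma x) x := by
  have hlog : ContDiffAt ℝ 2 (fun t => Real.log (Real.Gamma t)) x :=
    (contDiffAt_Gamma_two hx).log (Real.Gamma_pos_of_pos hx).ne'
  have hderiv : ContDiffAt ℝ 1 (deriv fun t => Real.log (Real.Gamma t)) x :=
    hlog.derivWithin (by norm_num)
  exact (hderiv.differentiableAt one_ne_zero).hasDerivAt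

theorem digamma_add_one {x : ℝ} (hx : 0 < x) : digamma (x + 1) = digamma x + x⁻¹ := by
  have hshift : HasDerivAt (fun t => Real.log (Real.Gamma (t + 1))) (digamma (x + 1)) x :=
    (hasDerivAt_log_Gamma (by linarith : 0 < x + 1)).comp_add_const x 1
  have hsum : HasDerivAt (fun t => Real.log (Real.Gamma t) + Real.log t) (digamma x + x⁻¹) x :=
    (hasDerivAt_log_Gamma hx).add (Real.hasDerivAt_log hx.ne')
  refine hshift.unique (hsum.congr_of_eventuallyEq ?_)
  filter_upwards [Ioi_mem_nhds hx] with t ht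
  have ht0 : 0 < t := ht
  rw [Real.Gamma_add_one ht0.ne', Real.log_mul ht0.ne' (Real.Gamma_pos_of_pos ht0).ne', add_comm]

theorem trigamma_add_one {x : ℝ} (hx : 0 < x) :
    trigamma (x + 1) = trigamma x - (x ^ 2)⁻¹ := by
  have hshift : HasDerivAt (fun t => digamma (t + 1)) (trigamma (x + 1)) x :=
    (hasDerivAt_digamma (by linarith : 0 < x + 1)).comp_add_const x 1
  have hsum : HasDerivAt (fun t => digamma t + t⁻¹) (trigamma x + -(x ^ 2)⁻¹) x :=
    (hasDerivAt_digamma hx).add (hasDerivAt_inv hx.ne')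
  rw [sub_eq_add_neg]
  refine hshift.unique (hsum.congr_of_eventuallyEq ?_)
  filter_upwards [Ioi_mem_nhds hx] with t ht using digamma_add_one ht

theorem digamma_add_nat {x : ℝ} (hx : 0 < x) (n : ℕ) :
    digamma (x + n) = digamma x + ∑ k ∈ Finset.range n, (x + k)⁻¹ := by
  induction n with
  | zero => simp
  | succ n ih =>
    rw [Finset.sum_range_succ, ← add_assoc, ← ih, ← digamma_add_one (by positivity)]
    push_cast
    ring_nf

theorem monotoneOn_digamma : MonotoneOn digamma (Ioi 0) :=
  Real.convexOn_log_Gamma.monotoneOn_deriv fun _ hx => differentiableAt_log_Gamma hx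

/-- The increment of `digamma` over a bounded shift vanishes at infinity. -/
theorem tendsto_digamma_add_nat_sub {x : ℝ} (hx : 0 < x) :
    Tendsto (fun n : ℕ => digamma (x + n) - digamma n) atTop (𝓝 0) := by
  obtain ⟨m, hm⟩ := exists_nat_ge x
  refine tendsto_of_tendsto_of_tendsto_of_le_of_le' tendsto_const_nhds
    (tendsto_const_div_atTop_nhds_zero_nat (m : ℝ)) ?_ ?_
  · filter_upwards [eventually_gt_atTop 0] with n hn
    have hn0 : (0 : ℝ) < n := by exact_mod_cast hn
    exact sub_nonneg.2 (monotoneOn_digamma hn0 (add_pos hx hn0) (by linarith))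
  · filter_upwards [eventually_gt_atTop 0] with n hn
    have hn0 : (0 : ℝ) < n := by exact_mod_cast hn
    have hmono : digamma (x + n) ≤ digamma (n + m) :=
      monotoneOn_digamma (add_pos hx hn0) (by simp only [mem_Ioi]; positivity) (by linarith)
    have hsum : ∑ k ∈ Finset.range m, ((n : ℝ) + k)⁻¹ ≤ m / n := by
      calc ∑ k ∈ Finset.range m, ((n : ℝ) + k)⁻¹ ≤ ∑ _k ∈ Finset.range m, (n : ℝ)⁻¹ := by
            gcongr
            simp
        _ = m / n := by simp [div_eq_mul_inv]
    rw [digamma_add_nat hn0] at hmono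
    linarith

theorem tendsto_digamma {x : ℝ} (hx : 0 < x) :
    Tendsto (fun n : ℕ => digamma n - ∑ k ∈ Finset.range n, (x + k)⁻¹) atTop
      (𝓝 (digamma x)) := by
  have h := (tendsto_digamma_add_nat_sub hx).const_sub (digamma x)
  rw [sub_zero] at h
  refine h.congr fun n => ?_
  rw [digamma_add_nat hx]
  ring

theorem concaveOn_digamma : ConcaveOn ℝ (Ioi 0) digamma := by
  refine ⟨convex_Ioi 0, fun x hx y hy p q hp hq hpq => ?_⟩
  refine le_of_tendsto_of_tendsto'
    (((tendsto_digamma hx).const_smul p).add ((tendsto_digamma hy).const_smul q))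
    (tendsto_digamma (convex_Ioi 0 hx hy hp hq hpq)) fun n => ?_
  have hsum : ∑ k ∈ Finset.range n, (p • x + q • y + k)⁻¹ ≤
      p * ∑ k ∈ Finset.range n, (x + k)⁻¹ + q * ∑ k ∈ Finset.range n, (y + k)⁻¹ := by
    rw [Finset.mul_sum, Finset.mul_sum, ← Finset.sum_add_distrib]
    refine Finset.sum_le_sum fun k _ => ?_
    have hx0 : 0 < x := hx
    have hy0 : 0 < y := hy
    have hinv := (convexOn_zpow (𝕜 := ℝ) (-1)).2 (add_pos_of_pos_of_nonneg hx0 k.cast_nonneg)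
      (add_pos_of_pos_of_nonneg hy0 k.cast_nonneg) hp hq hpq
    simp only [zpow_neg_one, smul_eq_mul] at hinv ⊢
    rwa [show p * (x + k) + q * (y + k) = p * x + q * y + k by
      linear_combination (k : ℝ) * hpq] at hinv
  simp only [smul_eq_mul] at hsum ⊢
  linear_combination hsum + digamma n * hpq

theorem antitoneOn_trigamma : AntitoneOn trigamma (Ioi 0) :=
  concaveOn_digamma.antitoneOn_deriv fun _ hx => (hasDerivAt_digamma hx).differentiableAt

theorem trigamma_sub_add_nat_le {x : ℝ} (hx : 0 < x) (n : ℕ) :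
    trigamma x - trigamma (x + n) ≤ n / x ^ 2 := by
  induction n with
  | zero => simp
  | succ n ih =>
    have hstep := trigamma_add_one (by positivity : 0 < x + n)
    have hinv : ((x + n) ^ 2)⁻¹ ≤ (x ^ 2)⁻¹ := by
      gcongr
      simp
    have hdiv : ((n + 1 : ℕ) : ℝ) / x ^ 2 = n / x ^ 2 + (x ^ 2)⁻¹ := by
      push_cast
      ring
    rw [hdiv, Nat.cast_succ, ← add_assoc, hstep]
    linarith

theorem trigamma_sub_add_le {x s : ℝ} (hx : 0 < x) (hs : 0 ≤ s) :
    trigamma x - trigamma (x + s) ≤ (s + 1) / x ^ 2 := by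
  have hceil : trigamma (x + ⌈s⌉₊) ≤ trigamma (x + s) :=
    antitoneOn_trigamma (add_pos_of_pos_of_nonneg hx hs)
      (add_pos_of_pos_of_nonneg hx (Nat.cast_nonneg _)) (by linarith [Nat.le_ceil s])
  have hle : (⌈s⌉₊ : ℝ) / x ^ 2 ≤ (s + 1) / x ^ 2 := by
    gcongr
    exact (Nat.ceil_lt_add_one hs).le
  linarith [trigamma_sub_add_nat_le hx ⌈s⌉₊]

theorem log_bnbPmf {r a l : ℝ} (hr : 0 < r) (ha : 1 < a) (hl : 0 < l) (y : ℕ) :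
    Real.log (bnbPmf l r a y) =
      Real.log (Real.Gamma (y + r) / (Real.Gamma (y + 1) * Real.Gamma r)) +
        (Real.log (Real.Gamma (a + r)) - Real.log (Real.Gamma a)) +
        (Real.log (Real.Gamma ((a - 1) / r * l + y)) -
          Real.log (Real.Gamma ((a - 1) / r * l + (y + a + r))) -
          Real.log (Real.Gamma ((a - 1) / r * l + 0)) +
          Real.log (Real.Gamma ((a - 1) / r * l + a))) := by
  have hx : 0 < (a - 1) / r * l := mul_pos (div_pos (by linarith) hr) hl
  have ha0 : 0 < a := by linarith
  have hC : 0 < Real.Gamma (y + r) / (Real.Gamma (y + 1) * Real.Gamma r) :=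
    div_pos (Real.Gamma_pos_of_pos (by positivity))
      (mul_pos (Real.Gamma_pos_of_pos (by positivity)) (Real.Gamma_pos_of_pos hr))
  have h₁ := Real.Gamma_pos_of_pos (by positivity : 0 < a + r)
  have h₂ := Real.Gamma_pos_of_pos (by positivity : 0 < (a - 1) / r * l + y)
  have h₃ := Real.Gamma_pos_of_pos (by positivity : 0 < (a - 1) / r * l + (y + a + r))
  have h₄ := Real.Gamma_pos_of_pos ha0
  have h₅ := Real.Gamma_pos_of_pos hx
  have h₆ := Real.Gamma_pos_of_pos (by positivity : 0 < (a - 1) / r * l + a)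
  rw [bnbPmf, betaFn, betaFn, mul_div_right_comm (a - 1) l r,
    show a + r + ((a - 1) / r * l + y) = (a - 1) / r * l + (y + a + r) by ring,
    add_comm a ((a - 1) / r * l), add_zero,
    Real.log_mul hC.ne' (by positivity), add_assoc (Real.log _), add_right_inj,
    Real.log_div (by positivity) (by positivity),
    Real.log_div (by positivity) h₃.ne', Real.log_mul h₁.ne' h₂.ne',
    Real.log_div (by positivity) h₆.ne', Real.log_mul h₄.ne' h₅.ne']
  ring

theorem HasDerivAt.comp_mul_add {f : ℝ → ℝ} {f' g l c : ℝ} (hf : HasDerivAt f f' (g * l + c)) :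
    HasDerivAt (fun t => f (g * t + c)) (g * f') l := by
  have hlin : HasDerivAt (fun t => g * t + c) g l := by
    simpa using ((hasDerivAt_id l).const_mul g).add_const c
  rw [mul_comm]
  exact hf.comp l hlin

theorem deriv_log_bnbPmf {r a l : ℝ} (hr : 0 < r) (ha : 1 < a) (hl : 0 < l) (y : ℕ) :
    deriv (fun l' => Real.log (bnbPmf l' r a y)) l =
      (a - 1) / r * digamma ((a - 1) / r * l + y) -
        (a - 1) / r * digamma ((a - 1) / r * l + (y + a + r)) -
        (a - 1) / r * digamma ((a - 1) / r * l + 0) +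
        (a - 1) / r * digamma ((a - 1) / r * l + a) := by
  have hx : 0 < (a - 1) / r * l := mul_pos (div_pos (by linarith) hr) hl
  have hmain (c : ℝ) (hc : 0 ≤ c) :
      HasDerivAt (fun t => Real.log (Real.Gamma ((a - 1) / r * t + c)))
        ((a - 1) / r * digamma ((a - 1) / r * l + c)) l :=
    (hasDerivAt_log_Gamma (add_pos_of_pos_of_nonneg hx hc)).comp_mul_add
  have hsum := (((hmain y (by positivity)).sub (hmain (y + a + r) (by positivity))).sub
    (hmain 0 le_rfl)).add (hmain a (by positivity))
  refine ((hsum.const_add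
    (Real.log (Real.Gamma (y + r) / (Real.Gamma (y + 1) * Real.Gamma r)) +
      (Real.log (Real.Gamma (a + r)) - Real.log (Real.Gamma a)))).congr_of_eventuallyEq ?_).deriv
  filter_upwards [Ioi_mem_nhds hl] with t ht using log_bnbPmf hr ha ht y

theorem deriv_deriv_log_bnbPmf {r a l : ℝ} (hr : 0 < r) (ha : 1 < a) (hl : 0 < l) (y : ℕ) :
    deriv (fun l => deriv (fun l' => Real.log (bnbPmf l' r a y)) l) l =
      ((a - 1) / r) ^ 2 *
        ((trigamma ((a - 1) / r * l + y) - trigamma ((a - 1) / r * l + y + a + r)) -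
          (trigamma ((a - 1) / r * l) - trigamma ((a - 1) / r * l + a))) := by
  have hx : 0 < (a - 1) / r * l := mul_pos (div_pos (by linarith) hr) hl
  have hmain (c : ℝ) (hc : 0 ≤ c) :
      HasDerivAt (fun t => (a - 1) / r * digamma ((a - 1) / r * t + c))
        ((a - 1) / r * ((a - 1) / r * trigamma ((a - 1) / r * l + c))) l :=
    (hasDerivAt_digamma (add_pos_of_pos_of_nonneg hx hc)).comp_mul_add.const_mul _
  have hsum := (((hmain y (by positivity)).sub (hmain (y + a + r) (by positivity))).sub
    (hmain 0 le_rfl)).add (hmain a (by positivity))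
  refine (hsum.congr_of_eventuallyEq ?_).deriv.trans ?_
  · filter_upwards [Ioi_mem_nhds hl] with t ht using deriv_log_bnbPmf hr ha ht y
  · rw [add_zero, ← add_assoc, ← add_assoc]
    ring

theorem bnb_log_second_deriv_lam_bound (r a cbar : ℝ) (hr : 0 < r) (ha : 1 < a)
    (hcbar : 0 < cbar) :
    ∀ lam : ℝ, cbar ≤ lam → ∀ y : ℕ,
      ((a - 1) / r) ^ 2 *
          (trigamma (((a - 1) / r) * lam + (y : ℝ)) - trigamma (((a - 1) / r) * lam + (y : ℝ) + a + r) +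
            trigamma (((a - 1) / r) * lam) - trigamma (((a - 1) / r) * lam + a)) ≤
        (2 * a + 2 + r) / cbar ^ 2 ∧
      |deriv (fun l => deriv (fun l' => Real.log (bnbPmf l' r a y)) l) lam| ≤
        ((a - 1) / r) ^ 2 *
          (trigamma (((a - 1) / r) * lam + (y : ℝ)) - trigamma (((a - 1) / r) * lam + (y : ℝ) + a + r) +
            trigamma (((a - 1) / r) * lam) - trigamma (((a - 1) / r) * lam + a)) := by
  intro lam hlam y
  have hlam0 : 0 < lam := hcbar.trans_le hlam
  have hg : 0 < (a - 1) / r := div_pos (by linarith) hr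
  have hderiv := deriv_deriv_log_bnbPmf hr ha hlam0 y
  set g := (a - 1) / r
  have hx : 0 < g * lam := mul_pos hg hlam0
  have hxy : 0 < g * lam + y := by positivity
  have har : 0 ≤ a + r := by linarith
  have hbound₁ : trigamma (g * lam + y) - trigamma (g * lam + y + a + r) ≤
      (a + r + 1) / (g * lam) ^ 2 := by
    have h := trigamma_sub_add_le hxy har
    rw [← add_assoc] at h
    refine h.trans ?_
    gcongr
    simp
  have hbound₂ := trigamma_sub_add_le hx (by linarith : 0 ≤ a)
  have hnonneg₁ : trigamma (g * lam + y + a + r) ≤ trigamma (g * lam + y) :=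
    antitoneOn_trigamma hxy (by simp only [mem_Ioi]; linarith) (by linarith)
  have hnonneg₂ : trigamma (g * lam + a) ≤ trigamma (g * lam) :=
    antitoneOn_trigamma hx (by simp only [mem_Ioi]; linarith) (by linarith)
  constructor
  · calc g ^ 2 * (trigamma (g * lam + y) - trigamma (g * lam + y + a + r) +
          trigamma (g * lam) - trigamma (g * lam + a))
        ≤ g ^ 2 * ((a + r + 1) / (g * lam) ^ 2 + (a + 1) / (g * lam) ^ 2) := by
          gcongr
          linarith
      _ = (2 * a + 2 + r) / lam ^ 2 := by
          field_simp
          ring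
      _ ≤ (2 * a + 2 + r) / cbar ^ 2 := by
          have : 0 ≤ 2 * a + 2 + r := by linarith
          gcongr
  · rw [hderiv, abs_mul, abs_of_nonneg (sq_nonneg g)]
    gcongr
    rw [abs_le]
    constructor <;> linarith
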